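/- For positive semidefinite operators 0 ≤ ρ ≤ σ ≤ σ' on a finite-dimensional Hilbert space (with supp(ρ) ⊆ supp(σ)), and α > 1 with β = α − 1, the sandwiched Rényi power is dominance-monotone in the conditioner: tr((σ'^{−β/(2α)} ρ σ'^{−β/(2α)})^α) ≤ tr((σ^{−β/(2α)} ρ σ^{−β/(2α)})^α). -/

import Mathlib

open scoped Matrix BigOperators Classical ComplexOrder

noncomputable section

/-- Real part of the trace of a complex matrix. -/
def rtr {d : ℕ} (M : Matrix (Fin d) (Fin d) ℂ) : ℝ := (Matrix.trace M).re

/-- Functional calculus applied to a matrix (junk value `0` if the matrix is not Hermitian). -/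
def mfun {d : ℕ} (f : ℝ → ℝ) (A : Matrix (Fin d) (Fin d) ℂ) : Matrix (Fin d) (Fin d) ℂ :=
  if h : A.IsHermitian then h.cfc f else 0

/-- Positive part `[A]₊` of a Hermitian matrix. -/
def posPartM {d : ℕ} (A : Matrix (Fin d) (Fin d) ℂ) : Matrix (Fin d) (Fin d) ℂ :=
  mfun (fun x => max x 0) A

/-- Projector onto the support of the positive part of a Hermitian matrix. -/
def posSuppProj {d : ℕ} (A : Matrix (Fin d) (Fin d) ℂ) : Matrix (Fin d) (Fin d) ℂ :=
  mfun (fun x => if 0 < x then 1 else 0) A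

/-- Operator absolute value of a Hermitian matrix. -/
def absM {d : ℕ} (A : Matrix (Fin d) (Fin d) ℂ) : Matrix (Fin d) (Fin d) ℂ :=
  mfun (fun x => |x|) A

/-- Moore–Penrose (relative) power of a Hermitian matrix: `x ↦ x ^ p` on the support,
`0` on the kernel. -/
def mpow {d : ℕ} (A : Matrix (Fin d) (Fin d) ℂ) (p : ℝ) : Matrix (Fin d) (Fin d) ℂ :=
  mfun (fun x => if x = 0 then 0 else x ^ p) A

/-- Support containment: the kernel of `σ` is contained in the kernel of `ρ`,
i.e. `supp ρ ⊆ supp σ` for positive semidefinite matrices. -/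
def suppSubset {d : ℕ} (ρ σ : Matrix (Fin d) (Fin d) ℂ) : Prop :=
  ∀ v : Fin d → ℂ, σ.mulVec v = 0 → ρ.mulVec v = 0

/-- Sandwiched Rényi power `R_α(ρ|σ) = tr((σ^{-β/(2α)} ρ σ^{-β/(2α)})^α)`, `β = α - 1`. -/
def sandR {d : ℕ} (α : ℝ) (ρ σ : Matrix (Fin d) (Fin d) ℂ) : ℝ :=
  rtr (mpow (mpow σ (-(α - 1) / (2 * α)) * ρ * mpow σ (-(α - 1) / (2 * α))) α)

/-- Petz Rényi power `tr(ρ^α σ^{-β})`, `β = α - 1`. -/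
def petzR {d : ℕ} (α : ℝ) (ρ σ : Matrix (Fin d) (Fin d) ℂ) : ℝ :=
  rtr (mpow ρ α * mpow σ (-(α - 1)))


/-!
Factor `ρ = Bᴴ * B` and put `s = (α - 1) / α`. Since `XᴴX` and `XXᴴ` have the same spectrum, the
sandwiched power is `tr ((B σ⁻ˢ Bᴴ) ^ α)`. As `s ∈ (0, 1)`, the map `σ ↦ σˢ` is operator monotone
(Löwner–Heinz), and inverting on the support of `B`, which lies in those of `σ` and `σ'`, gives
`B σ'⁻ˢ Bᴴ ≤ B σ⁻ˢ Bᴴ`. Finally `C ↦ tr (C ^ α)` is monotone: by Peierls' inequality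
`∑ₖ f ⟨cₖ, T cₖ⟩ ≤ tr (f T)` for convex `f` and any orthonormal basis `c`; take `c` to be an
eigenbasis of a smaller operator.
-/

section StarOrderedRing

variable {R : Type*} [NonUnitalRing R] [PartialOrder R] [StarRing R] [StarOrderedRing R]

/-- For `c = 1` this is antitonicity of the inverse; in general `x` and `y` only have to invert `a`
and `b` on the support of `c`. The proof expands `0 ≤ (c * x - c * y) * a * star (c * x - c * y)`
and then replaces `a` by `b` in the term that is quadratic in `y`. -/
theorem mul_mul_star_le_of_le_of_mul_eq {a b c x y : R} (ha : 0 ≤ a) (hab : a ≤ b)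
    (hx : IsSelfAdjoint x) (hy : IsSelfAdjoint y) (hcxa : c * x * a = c) (hcyb : c * y * b = c) :
    c * y * star c ≤ c * x * star c := by
  have hsx : star (c * x) = x * star c := by rw [star_mul, hx.star_eq]
  have hsy : star (c * y) = y * star c := by rw [star_mul, hy.star_eq]
  have haxc : a * (x * star c) = star c := by
    rw [← hsx, ← (IsSelfAdjoint.of_nonneg ha).star_eq, ← star_mul, hcxa]
  have hxa : c * x * a * star (c * y) = c * y * star c := by rw [hcxa, hsy, ← mul_assoc]
  have hya : c * y * a * star (c * x) = c * y * star c := by rw [hsx, mul_assoc _ a, haxc]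
  have hyb : c * y * b * star (c * y) = c * y * star c := by rw [hcyb, hsy, ← mul_assoc]
  have hxx : c * x * a * star (c * x) = c * x * star c := by rw [hcxa, hsx, ← mul_assoc]
  have hle : c * y * a * star (c * y) ≤ c * y * star c :=
    (star_right_conjugate_le_conjugate hab (c * y)).trans_eq hyb
  have hsq : 0 ≤ c * x * star c - c * y * star c - (c * y * star c - c * y * a * star (c * y)) :=
    calc 0 ≤ (c * x - c * y) * a * star (c * x - c * y) :=
          star_right_conjugate_nonneg ha _
      _ = _ := by rw [star_sub, sub_mul, sub_mul, mul_sub, mul_sub, hxx, hxa, hya]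
  exact sub_nonneg.mp ((sub_nonneg.mpr hle).trans (sub_nonneg.mp hsq))

end StarOrderedRing

section DiagonalOperator

variable {𝕜 E ι κ : Type*} [RCLike 𝕜] [NormedAddCommGroup E] [InnerProductSpace 𝕜 E]
  [Fintype ι] [Fintype κ] {S T : E →ₗ[𝕜] E} {s : Set ℝ} {f : ℝ → ℝ}

open scoped InnerProductSpace

theorem re_inner_map_self_eq_sum (b : OrthonormalBasis ι 𝕜 E) {μ : ι → ℝ}
    (hT : ∀ i, T (b i) = (μ i : 𝕜) • b i) (v : E) :
    RCLike.re ⟪v, T v⟫_𝕜 = ∑ i, ‖⟪b i, v⟫_𝕜‖ ^ 2 * μ i := by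
  have hTv : T v = ∑ i, ⟪b i, v⟫_𝕜 • (μ i : 𝕜) • b i := by
    conv_lhs => rw [← b.sum_repr' v]
    simp only [map_sum, map_smul, hT]
  rw [hTv, inner_sum, map_sum]
  refine Finset.sum_congr rfl fun i _ ↦ ?_
  rw [inner_smul_right, inner_smul_right, mul_left_comm, RCLike.re_ofReal_mul,
    inner_mul_symm_re_eq_norm, norm_mul, norm_inner_symm v, ← sq, mul_comm]

theorem re_inner_map_self_mem (b : OrthonormalBasis ι 𝕜 E) {μ : ι → ℝ}
    (hT : ∀ i, T (b i) = (μ i : 𝕜) • b i) (hs : Convex ℝ s) (hμ : ∀ i, μ i ∈ s)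
    {v : E} (hv : ‖v‖ = 1) : RCLike.re ⟪v, T v⟫_𝕜 ∈ s := by
  rw [re_inner_map_self_eq_sum b hT]
  exact hs.sum_mem (fun i _ ↦ sq_nonneg _) (by rw [b.sum_sq_norm_inner_right, hv, one_pow])
    fun i _ ↦ hμ i

theorem map_re_inner_map_self_le_sum (b : OrthonormalBasis ι 𝕜 E) {μ : ι → ℝ}
    (hT : ∀ i, T (b i) = (μ i : 𝕜) • b i) (hf : ConvexOn ℝ s f) (hμ : ∀ i, μ i ∈ s)
    {v : E} (hv : ‖v‖ = 1) :
    f (RCLike.re ⟪v, T v⟫_𝕜) ≤ ∑ i, ‖⟪b i, v⟫_𝕜‖ ^ 2 * f (μ i) := by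
  rw [re_inner_map_self_eq_sum b hT]
  exact hf.map_sum_le (fun i _ ↦ sq_nonneg _) (by rw [b.sum_sq_norm_inner_right, hv, one_pow])
    fun i _ ↦ hμ i

theorem sum_map_re_inner_map_self_le_sum (b : OrthonormalBasis ι 𝕜 E)
    (c : OrthonormalBasis κ 𝕜 E) {μ : ι → ℝ} (hT : ∀ i, T (b i) = (μ i : 𝕜) • b i)
    (hf : ConvexOn ℝ s f) (hμ : ∀ i, μ i ∈ s) :
    ∑ k, f (RCLike.re ⟪c k, T (c k)⟫_𝕜) ≤ ∑ i, f (μ i) :=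
  calc ∑ k, f (RCLike.re ⟪c k, T (c k)⟫_𝕜)
      ≤ ∑ k, ∑ i, ‖⟪b i, c k⟫_𝕜‖ ^ 2 * f (μ i) :=
        Finset.sum_le_sum fun k _ ↦ map_re_inner_map_self_le_sum b hT hf hμ (c.norm_eq_one k)
    _ = ∑ i, (∑ k, ‖⟪b i, c k⟫_𝕜‖ ^ 2) * f (μ i) := by
        rw [Finset.sum_comm]
        simp only [Finset.sum_mul]
    _ = ∑ i, f (μ i) := by
        simp only [c.sum_sq_norm_inner_left, b.norm_eq_one, one_pow, one_mul]

theorem sum_map_eigenvalues_le_sum_map_eigenvalues (b : OrthonormalBasis ι 𝕜 E)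
    (c : OrthonormalBasis κ 𝕜 E) {μ : ι → ℝ} {ν : κ → ℝ}
    (hS : ∀ k, S (c k) = (ν k : 𝕜) • c k) (hT : ∀ i, T (b i) = (μ i : 𝕜) • b i)
    (hST : S ≤ T) (hf : ConvexOn ℝ s f) (hf' : MonotoneOn f s)
    (hν : ∀ k, ν k ∈ s) (hμ : ∀ i, μ i ∈ s) :
    ∑ k, f (ν k) ≤ ∑ i, f (μ i) := by
  have hνT (k : κ) : ν k ≤ RCLike.re ⟪c k, T (c k)⟫_𝕜 :=
    calc ν k = RCLike.re ⟪c k, S (c k)⟫_𝕜 := by simp [hS, inner_smul_right]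
      _ ≤ RCLike.re ⟪c k, T (c k)⟫_𝕜 := by
        have h := ((LinearMap.le_def S T).mp hST).re_inner_nonneg_right (c k)
        rwa [LinearMap.sub_apply, inner_sub_right, map_sub, sub_nonneg] at h
  calc ∑ k, f (ν k) ≤ ∑ k, f (RCLike.re ⟪c k, T (c k)⟫_𝕜) :=
        Finset.sum_le_sum fun k _ ↦ hf' (hν k)
          (re_inner_map_self_mem b hT hf.1 hμ (c.norm_eq_one k)) (hνT k)
    _ ≤ ∑ i, f (μ i) := sum_map_re_inner_map_self_le_sum b c hT hf hμ

end DiagonalOperator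

section TraceFunction

open scoped MatrixOrder

variable {𝕜 n : Type*} [RCLike 𝕜] [Fintype n] [DecidableEq n] {A B : Matrix n n 𝕜}

theorem trace_cfc_eq_sum_eigenvalues (hA : A.IsHermitian) (f : ℝ → ℝ) :
    (cfc f A).trace = ∑ i, (f (hA.eigenvalues i) : 𝕜) := by
  rw [hA.cfc_eq, Matrix.IsHermitian.cfc, Unitary.conjStarAlgAut_apply, Matrix.trace_mul_cycle,
    Unitary.coe_star_mul_self, one_mul, Matrix.trace_diagonal]
  rfl

theorem trace_cfc_conjTranspose_mul_self (X : Matrix n n 𝕜) (f : ℝ → ℝ) :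
    (cfc f (Xᴴ * X)).trace = (cfc f (X * Xᴴ)).trace := by
  have heig : (Matrix.isHermitian_conjTranspose_mul_self X).eigenvalues =
      (Matrix.isHermitian_mul_conjTranspose_self X).eigenvalues := by
    rw [Matrix.IsHermitian.eigenvalues_eq_eigenvalues_iff, Matrix.charpoly_mul_comm]
  rw [trace_cfc_eq_sum_eigenvalues (Matrix.isHermitian_conjTranspose_mul_self X),
    trace_cfc_eq_sum_eigenvalues (Matrix.isHermitian_mul_conjTranspose_self X), heig]

theorem re_trace_cfc_le_re_trace_cfc {s : Set ℝ} {f : ℝ → ℝ} (hA : A.IsHermitian)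
    (hB : B.IsHermitian) (hAB : A ≤ B) (hf : ConvexOn ℝ s f) (hf' : MonotoneOn f s)
    (hsA : spectrum ℝ A ⊆ s) (hsB : spectrum ℝ B ⊆ s) :
    RCLike.re (cfc f A).trace ≤ RCLike.re (cfc f B).trace := by
  have heig {X : Matrix n n 𝕜} (hX : X.IsHermitian) (i : n) :
      X.toEuclideanLin (hX.eigenvectorBasis i) =
        (hX.eigenvalues i : 𝕜) • hX.eigenvectorBasis i := by
    rw [Matrix.toLpLin_apply, hX.mulVec_eigenvectorBasis]
    ext j
    simp [RCLike.real_smul_eq_coe_mul]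
  have hle : A.toEuclideanLin ≤ B.toEuclideanLin := by
    rw [LinearMap.le_def, ← map_sub, Matrix.isPositive_toEuclideanLin_iff]
    exact hAB
  simpa only [trace_cfc_eq_sum_eigenvalues hA, trace_cfc_eq_sum_eigenvalues hB, map_sum,
    RCLike.ofReal_re] using
    sum_map_eigenvalues_le_sum_map_eigenvalues hB.eigenvectorBasis hA.eigenvectorBasis (heig hA)
      (heig hB) hle hf hf' (fun i ↦ hsA (hA.eigenvalues_mem_spectrum_real i))
      fun i ↦ hsB (hB.eigenvalues_mem_spectrum_real i)

end TraceFunction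

section RelativePower

open scoped MatrixOrder

variable {d : ℕ} {A B : Matrix (Fin d) (Fin d) ℂ}

theorem mfun_eq_cfc (f : ℝ → ℝ) (A : Matrix (Fin d) (Fin d) ℂ) : mfun f A = cfc f A := by
  by_cases hA : A.IsHermitian
  · rw [mfun, dif_pos hA, hA.cfc_eq]
  · rw [mfun, dif_neg hA, cfc_apply_of_not_predicate (p := IsSelfAdjoint) A hA]

theorem isHermitian_mpow (A : Matrix (Fin d) (Fin d) ℂ) (p : ℝ) : (mpow A p).IsHermitian := by
  rw [mpow, mfun_eq_cfc]
  exact cfc_predicate _ A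

theorem posSemidef_mpow (hA : A.PosSemidef) (p : ℝ) : (mpow A p).PosSemidef := by
  rw [mpow, mfun_eq_cfc, ← Matrix.nonneg_iff_posSemidef]
  refine cfc_nonneg fun x hx ↦ ?_
  have hx0 := spectrum_nonneg_of_nonneg hA.nonneg hx
  split_ifs <;> positivity

theorem mpow_mul_mpow (hA : A.PosSemidef) (p q : ℝ) : mpow A p * mpow A q = mpow A (p + q) := by
  simp only [mpow, mfun_eq_cfc]
  rw [← cfc_mul _ _ A (A.finite_real_spectrum.continuousOn _)
    (A.finite_real_spectrum.continuousOn _)]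
  refine cfc_congr fun x hx ↦ ?_
  by_cases hx0 : x = 0
  · simp only [hx0, if_true, mul_zero]
  · have hpos : 0 < x := (spectrum_nonneg_of_nonneg hA.nonneg hx).lt_of_ne' hx0
    simp only [hx0, if_false, Real.rpow_add hpos]

theorem mpow_one (hA : A.IsHermitian) : mpow A 1 = A := by
  have hid : (fun x : ℝ ↦ if x = 0 then 0 else x ^ (1 : ℝ)) = fun x ↦ x := by
    funext x
    split_ifs with hx
    · exact hx.symm
    · exact Real.rpow_one x
  rw [mpow, mfun_eq_cfc, hid, cfc_id' ℝ A hA.isSelfAdjoint]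

theorem mpow_eq_cfc_rpow (A : Matrix (Fin d) (Fin d) ℂ) {p : ℝ} (hp : p ≠ 0) :
    mpow A p = cfc (fun x : ℝ ↦ x ^ p) A := by
  rw [mpow, mfun_eq_cfc]
  congr! 2 with x
  split_ifs with hx
  · rw [hx, Real.zero_rpow hp]
  · rfl

open scoped Matrix.Norms.L2Operator in
theorem mpow_le_mpow (hA : A.PosSemidef) (hAB : A ≤ B) {p : ℝ} (hp0 : 0 < p) (hp1 : p ≤ 1) :
    mpow A p ≤ mpow B p := by
  rw [mpow_eq_cfc_rpow A hp0.ne', mpow_eq_cfc_rpow B hp0.ne', ← CFC.rpow_eq_cfc_real hA.nonneg,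
    ← CFC.rpow_eq_cfc_real (hA.nonneg.trans hAB)]
  exact CFC.rpow_le_rpow ⟨hp0.le, hp1⟩ hAB

theorem rtr_mpow_le_rtr_mpow (hA : A.PosSemidef) (hAB : A ≤ B) {p : ℝ} (hp : 1 ≤ p) :
    rtr (mpow A p) ≤ rtr (mpow B p) := by
  have hp0 : 0 < p := one_pos.trans_le hp
  have hB : 0 ≤ B := hA.nonneg.trans hAB
  rw [mpow_eq_cfc_rpow A hp0.ne', mpow_eq_cfc_rpow B hp0.ne']
  exact re_trace_cfc_le_re_trace_cfc hA.isHermitian (IsSelfAdjoint.of_nonneg hB) hAB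
    (convexOn_rpow hp) (Real.monotoneOn_rpow_Ici_of_exponent_nonneg hp0.le)
    (fun _ hx ↦ spectrum_nonneg_of_nonneg hA.nonneg hx)
    fun _ hx ↦ spectrum_nonneg_of_nonneg hB hx

end RelativePower

section Support

open scoped MatrixOrder

variable {d : ℕ} {B σ σ' : Matrix (Fin d) (Fin d) ℂ}

theorem suppSubset_of_le (hσ : σ.PosSemidef) (h : σ ≤ σ') : suppSubset σ σ' := by
  intro v hv
  have hle := (Matrix.le_iff.mp h).dotProduct_mulVec_nonneg v
  rw [Matrix.sub_mulVec, hv, zero_sub, dotProduct_neg, neg_nonneg] at hle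
  exact (hσ.dotProduct_mulVec_zero_iff v).mp (hle.antisymm (hσ.dotProduct_mulVec_nonneg v))

/-- `mpow σ 0` is the projection onto the support of `σ`, not the identity. -/
theorem mul_mpow_zero_of_suppSubset (hσ : σ.PosSemidef) (hsupp : suppSubset (Bᴴ * B) σ) :
    B * mpow σ 0 = B := by
  have hσP : σ * (1 - mpow σ 0) = 0 := by
    have hσσ := mpow_mul_mpow hσ 1 0
    rw [add_zero, mpow_one hσ.isHermitian] at hσσ
    rw [mul_sub, mul_one, hσσ, sub_self]
  have hρP : Bᴴ * B * (1 - mpow σ 0) = 0 := by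
    refine Matrix.ext_of_mulVec_single fun i ↦ ?_
    rw [← Matrix.mulVec_mulVec, hsupp _ (by rw [Matrix.mulVec_mulVec, hσP, Matrix.zero_mulVec]),
      Matrix.zero_mulVec]
  rw [Matrix.conjTranspose_mul_self_mul_eq_zero, mul_sub, mul_one, sub_eq_zero] at hρP
  exact hρP.symm

theorem mul_mpow_neg_mul_conjTranspose_le (hσ : σ.PosSemidef) (h : σ ≤ σ')
    (hsupp : suppSubset (Bᴴ * B) σ) {s : ℝ} (hs0 : 0 < s) (hs1 : s ≤ 1) :
    B * mpow σ' (-s) * Bᴴ ≤ B * mpow σ (-s) * Bᴴ := by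
  have hσ' : σ'.PosSemidef := Matrix.nonneg_iff_posSemidef.mp (hσ.nonneg.trans h)
  have hsupp' : suppSubset (Bᴴ * B) σ' := fun v hv ↦ hsupp v (suppSubset_of_le hσ h v hv)
  have hinv {τ : Matrix (Fin d) (Fin d) ℂ} (hτ : τ.PosSemidef) (hBτ : suppSubset (Bᴴ * B) τ) :
      B * mpow τ (-s) * mpow τ s = B := by
    rw [mul_assoc, mpow_mul_mpow hτ, neg_add_cancel, mul_mpow_zero_of_suppSubset hτ hBτ]
  exact mul_mul_star_le_of_le_of_mul_eq (posSemidef_mpow hσ s).nonneg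
    (mpow_le_mpow hσ h hs0 hs1) (isHermitian_mpow σ _) (isHermitian_mpow σ' _)
    (hinv hσ hsupp) (hinv hσ' hsupp')

end Support

theorem sandR_conjTranspose_mul_self {d : ℕ} {σ : Matrix (Fin d) (Fin d) ℂ} (hσ : σ.PosSemidef)
    (B : Matrix (Fin d) (Fin d) ℂ) (α : ℝ) :
    sandR α (Bᴴ * B) σ = rtr (mpow (B * mpow σ (-((α - 1) / α)) * Bᴴ) α) := by
  set S := mpow σ (-(α - 1) / (2 * α)) with hS
  have hSS : S * S = mpow σ (-((α - 1) / α)) := by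
    rw [hS, mpow_mul_mpow hσ]
    congr 1
    ring
  have hSH : Sᴴ = S := isHermitian_mpow σ _
  have hleft : S * (Bᴴ * B) * S = (B * S)ᴴ * (B * S) := by
    rw [Matrix.conjTranspose_mul, hSH]
    simp only [mul_assoc]
  have hright : B * mpow σ (-((α - 1) / α)) * Bᴴ = (B * S) * (B * S)ᴴ := by
    rw [Matrix.conjTranspose_mul, hSH, ← hSS]
    simp only [mul_assoc]
  rw [sandR, ← hS, hleft, hright]
  simp only [rtr, mpow, mfun_eq_cfc, trace_cfc_conjTranspose_mul_self]

open scoped MatrixOrder in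
theorem stmt6_general {d : ℕ} {ρ σ σ' : Matrix (Fin d) (Fin d) ℂ}
    (hρ : ρ.PosSemidef) (hσ : σ.PosSemidef) (hσσ' : (σ' - σ).PosSemidef)
    (hsupp : suppSubset ρ σ) {α : ℝ} (hα : 1 < α) :
    sandR α ρ σ' ≤ sandR α ρ σ := by
  obtain ⟨B, rfl⟩ : ∃ B, ρ = Bᴴ * B := CStarAlgebra.nonneg_iff_eq_star_mul_self.mp hρ.nonneg
  have hα0 : 0 < α := one_pos.trans hα
  have hσ' : σ'.PosSemidef := by simpa only [sub_add_cancel] using hσσ'.add hσ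
  have hs0 : 0 < (α - 1) / α := div_pos (sub_pos.mpr hα) hα0
  have hs1 : (α - 1) / α ≤ 1 := (div_le_one hα0).mpr (sub_le_self α one_pos.le)
  rw [sandR_conjTranspose_mul_self hσ', sandR_conjTranspose_mul_self hσ]
  exact rtr_mpow_le_rtr_mpow ((posSemidef_mpow hσ' _).mul_mul_conjTranspose_same B)
    (mul_mpow_neg_mul_conjTranspose_le hσ (Matrix.le_iff.mpr hσσ') hsupp hs0 hs1) hα.le

/-- Dominance property of the sandwiched Rényi power: enlarging the conditioner
`σ ≤ σ'` decreases the Rényi power. -/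
theorem stmt6 {d : ℕ} (ρ σ σ' : Matrix (Fin d) (Fin d) ℂ)
    (hρ : ρ.PosSemidef) (hσ : σ.PosSemidef) (hσ' : σ'.PosSemidef)
    (hρσ : (σ - ρ).PosSemidef) (hσσ' : (σ' - σ).PosSemidef)
    (hsupp : suppSubset ρ σ)
    (α : ℝ) (hα : 1 < α) :
    sandR α ρ σ' ≤ sandR α ρ σ := by
  exact stmt6_general hρ hσ hσσ' hsupp hα
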